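/- Under the standing conventions, the projective dimension of L(𝔄) equals the maximum of |K_1| + ⋯ + |K_m| − m over all tuples (K_1,...,K_m) with ∅ ≠ K_i ⊆ A_i, max(K_i) ≤ min(K_j) whenever p_i < p_j, and (max K_1,...,max K_m) ∈ 𝔄. -/

import Mathlib

/-!
Grouping the generators of `L` by their first letter `a` writes `L = ∑ₐ xₐ Jₐ`, where `Jₐ` is the
ideal of the slice at `a`. Attach the summands in increasing order of `a`, and let
`B = ∑_{b < a} x_b J_b` be the part already built. Since `Jₐ ≤ J_b` for `b < a` and `Jₐ` does not
involve the variables of the first position, the elements of `Jₐ` that `xₐ` multiplies into `B` form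
`A = (x_b : b < a) Jₐ`, which gives an exact sequence `0 → A → B ⊕ Jₐ → B + xₐ Jₐ → 0`.

Let `k` be the residue module and suppose that there are letters below `a`. The map `A → B ⊕ Jₐ`
kills `Ext(-, k)` in the top degree `pd A`: its first component is a multiple of `xₐ`; its second
component is a multiple of a variable if only one letter lies below `a`, and otherwise
`pd Jₐ < pd A`. Hence nothing cancels and `pd (B + xₐ Jₐ) = max (pd B) (pd A + 1)`, where
`pd A + 1 = pd Jₐ + #{b | b < a}`. The boxes of words obey the same recursion.

In a minimal resolution, once a syzygy module is projective, the next free module `M` satisfies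
`𝔪 M = M` and hence vanishes, so the length of the resolution is the projective dimension.
-/

open MvPolynomial

/-- A minimal multigraded free resolution of an ideal `I`. -/
structure MinMGFreeRes (K : Type) [Field K] (σ : Type)
    (I : Ideal (MvPolynomial σ K)) where
  B : ℕ → Type
  finB : ∀ t, Finite (B t)
  deg : (t : ℕ) → B t → (σ →₀ ℕ)
  d : (t : ℕ) →
    ((B (t + 1)) →₀ MvPolynomial σ K) →ₗ[MvPolynomial σ K]
      ((B t) →₀ MvPolynomial σ K)
  ε : ((B 0) →₀ MvPolynomial σ K) →ₗ[MvPolynomial σ K] MvPolynomial σ K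
  bounded : ∃ N, ∀ t, N ≤ t → IsEmpty (B t)
  epi : LinearMap.range ε = I
  exact0 : LinearMap.ker ε = LinearMap.range (d 0)
  exact : ∀ t, LinearMap.ker (d t) = LinearMap.range (d (t + 1))
  graded_eps : ∀ b, ε (Finsupp.single b 1) = monomial (deg 0 b) 1
  graded_d : ∀ (t : ℕ) (b : B (t + 1)) (c : B t), ∃ k : K,
    (d t (Finsupp.single b 1)) c = monomial (deg (t + 1) b - deg t c) k ∧
      (k ≠ 0 → deg t c ≤ deg (t + 1) b ∧ deg t c ≠ deg (t + 1) b)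

open Finset CategoryTheory CategoryTheory.Abelian

universe u v w

namespace CoLetterplace

section Abelian

variable {C : Type u} [Category.{v} C] [Abelian C] [HasExt.{w} C] {X X' Y : C} {a b d n : ℕ}

/-- The object `X` has projective dimension exactly `d`, and this is witnessed by a nonzero class in
`Ext X Y d`. Fixing the test object `Y` makes the lower bound propagate along exact sequences. -/
structure ProjDimDetectedBy (Y X : C) (d : ℕ) : Prop where
  hasProjectiveDimensionLE : HasProjectiveDimensionLE X d
  nontrivial_ext : Nontrivial (Ext X Y d)

lemma subsingleton_ext_of_retract (r : Retract X X') (h : Subsingleton (Ext X' Y n)) :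
    Subsingleton (Ext X Y n) := by
  refine subsingleton_of_forall_eq 0 fun ξ ↦ ?_
  rw [← Ext.mk₀_id_comp ξ, ← r.retract, ← Ext.mk₀_comp_mk₀_assoc,
    Subsingleton.elim ((Ext.mk₀ r.r).comp ξ (zero_add n)) 0, Ext.comp_zero]

namespace ProjDimDetectedBy

lemma hasProjectiveDimensionLT (h : ProjDimDetectedBy Y X d) (hn : d < n) :
    HasProjectiveDimensionLT X n :=
  have := h.hasProjectiveDimensionLE
  hasProjectiveDimensionLT_of_ge X (d + 1) n hn

lemma subsingleton_ext (h : ProjDimDetectedBy Y X d) (hn : d < n) : Subsingleton (Ext X Y n) :=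
  have := h.hasProjectiveDimensionLT hn
  HasProjectiveDimensionLT.subsingleton X n n le_rfl Y

lemma not_hasProjectiveDimensionLT (h : ProjDimDetectedBy Y X d) :
    ¬ HasProjectiveDimensionLT X d := fun _ ↦
  have := h.nontrivial_ext
  not_subsingleton (Ext X Y d) (HasProjectiveDimensionLT.subsingleton X d d le_rfl Y)

lemma of_iso (h : ProjDimDetectedBy Y X d) (e : X ≅ X') : ProjDimDetectedBy Y X' d where
  hasProjectiveDimensionLE :=
    have := h.hasProjectiveDimensionLE
    hasProjectiveDimensionLT_of_iso e (d + 1)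
  nontrivial_ext := by
    have := h.nontrivial_ext
    contrapose! this
    exact subsingleton_ext_of_retract e.retract this

lemma biprod (h : ProjDimDetectedBy Y X a) (h' : ProjDimDetectedBy Y X' b) :
    ProjDimDetectedBy Y (X ⊞ X') (max a b) where
  hasProjectiveDimensionLE := by
    have := h.hasProjectiveDimensionLT (n := max a b + 1) (by lia)
    have := h'.hasProjectiveDimensionLT (n := max a b + 1) (by lia)
    infer_instance
  nontrivial_ext := by
    have := h.nontrivial_ext
    have := h'.nontrivial_ext
    have : Nontrivial (Ext X Y (max a b) × Ext X' Y (max a b)) := by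
      rcases max_choice a b with hm | hm <;> rw [hm] <;> infer_instance
    exact Ext.biprodAddEquiv.toEquiv.nontrivial

lemma of_shortExact {S : ShortComplex C} (hS : S.ShortExact) (h₁ : ProjDimDetectedBy Y S.X₁ a)
    (h₂ : ProjDimDetectedBy Y S.X₂ b)
    (hf : ∀ ξ : Ext S.X₂ Y a, (Ext.mk₀ S.f).comp ξ (zero_add a) = 0) :
    ProjDimDetectedBy Y S.X₃ (max b (a + 1)) where
  hasProjectiveDimensionLE := hS.hasProjectiveDimensionLT_X₃ (max b (a + 1))
    (h₁.hasProjectiveDimensionLT (by lia)) (h₂.hasProjectiveDimensionLT (by lia))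
  nontrivial_ext := by
    by_contra! h₃
    rcases lt_or_ge a b with hab | hba
    · rw [max_eq_left hab] at h₃
      have := h₁.subsingleton_ext hab
      have := h₂.nontrivial_ext
      obtain ⟨ξ, hξ⟩ := exists_ne (0 : Ext S.X₂ Y b)
      obtain ⟨ζ, rfl⟩ := Ext.contravariant_sequence_exact₂ hS Y ξ (Subsingleton.elim _ _)
      exact hξ (by rw [Subsingleton.elim ζ 0, Ext.comp_zero])
    · rw [max_eq_right (by lia)] at h₃
      have := h₁.nontrivial_ext
      obtain ⟨ξ, hξ⟩ := exists_ne (0 : Ext S.X₁ Y a)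
      obtain ⟨ζ, rfl⟩ := Ext.contravariant_sequence_exact₁ hS Y ξ (add_comm 1 a)
        (Subsingleton.elim _ _)
      exact hξ (hf ζ)

end ProjDimDetectedBy

end Abelian

section Module

variable {R : Type u} [CommRing R] {P M N : Type u} [AddCommGroup P] [AddCommGroup M]
  [AddCommGroup N] [Module R P] [Module R M] [Module R N] {Y : ModuleCat.{u} R} {n : ℕ}

lemma mk₀_ofHom_smul_comp {x : R} (hx : ∀ y : Y, x • y = 0) (f : M →ₗ[R] N)
    (ξ : Ext (ModuleCat.of R N) Y n) :
    (Ext.mk₀ (ModuleCat.ofHom (x • f))).comp ξ (zero_add n) = 0 := by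
  have hY : x • 𝟙 Y = 0 := by
    ext y
    exact hx y
  have hξ : x • ξ = 0 := by
    rw [Ext.smul_eq_comp_mk₀, hY, Ext.mk₀_zero, Ext.comp_zero]
  have hf : ModuleCat.ofHom (x • f) = x • ModuleCat.ofHom f := rfl
  rw [hf, Ext.mk₀_smul, Ext.smul_comp, ← Ext.comp_smul, hξ, Ext.comp_zero]

lemma mk₀_ofHom_prod_comp {f : P →ₗ[R] M} {g : P →ₗ[R] N}
    (hf : ∀ ξ : Ext (ModuleCat.of R M) Y n,
      (Ext.mk₀ (ModuleCat.ofHom f)).comp ξ (zero_add n) = 0)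
    (hg : ∀ ξ : Ext (ModuleCat.of R N) Y n,
      (Ext.mk₀ (ModuleCat.ofHom g)).comp ξ (zero_add n) = 0)
    (ξ : Ext (ModuleCat.of R (M × N)) Y n) :
    (Ext.mk₀ (ModuleCat.ofHom (f.prod g))).comp ξ (zero_add n) = 0 := by
  have hfac : ModuleCat.ofHom (f.prod g) =
      ModuleCat.ofHom f ≫ ModuleCat.ofHom (LinearMap.inl R M N) +
        ModuleCat.ofHom g ≫ ModuleCat.ofHom (LinearMap.inr R M N) := by
    ext z <;> simp
  rw [hfac, Ext.mk₀_add, Ext.add_comp, ← Ext.mk₀_comp_mk₀_assoc, ← Ext.mk₀_comp_mk₀_assoc, hf, hg,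
    add_zero]

lemma ProjDimDetectedBy.prod {a b : ℕ} (h : ProjDimDetectedBy Y (ModuleCat.of R M) a)
    (h' : ProjDimDetectedBy Y (ModuleCat.of R N) b) :
    ProjDimDetectedBy Y (ModuleCat.of R (M × N)) (max a b) :=
  (h.biprod h').of_iso (ModuleCat.biprodIsoProd (.of R M) (.of R N))

end Module

section Ideals

variable {R : Type u} [CommRing R] {Y : ModuleCat.{u} R}

lemma projDimDetectedBy_top [Nontrivial Y] :
    ProjDimDetectedBy Y (ModuleCat.of R (⊤ : Ideal R)) 0 where
  hasProjectiveDimensionLE := by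
    have : Module.Projective R (⊤ : Ideal R) := .of_equiv Submodule.topEquiv.symm
    have : Projective (ModuleCat.of R (⊤ : Ideal R)) := inferInstance
    infer_instance
  nontrivial_ext := by
    obtain ⟨y, hy⟩ := exists_ne (0 : Y)
    refine ⟨Ext.mk₀ (ModuleCat.ofHom
      (LinearMap.toSpanSingleton R Y y ∘ₗ (⊤ : Ideal R).subtype)), 0, fun h ↦ hy ?_⟩
    simpa using LinearMap.congr_fun (congrArg ModuleCat.Hom.hom
      ((Ext.mk₀_eq_zero_iff _).mp h)) (⟨1, trivial⟩ : (⊤ : Ideal R))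

/-- The map `z ↦ c * z` identifies `J` with `span {c} * J` when `c` is a nonzerodivisor. -/
noncomputable def spanSingletonMulEquiv {c : R} (hc : ∀ z, c * z = 0 → z = 0) (J : Ideal R) :
    J ≃ₗ[R] (Ideal.span {c} * J : Ideal R) :=
  .ofBijective (((LinearMap.mulLeft R c).domRestrict J).codRestrict (Ideal.span {c} * J)
    fun z ↦ Ideal.mul_mem_mul (Ideal.mem_span_singleton_self c) z.2) <| by
    refine ⟨(injective_iff_map_eq_zero _).mpr fun z hz ↦ ?_, fun ⟨w, hw⟩ ↦ ?_⟩
    · exact Subtype.ext (hc z (congrArg Subtype.val hz))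
    · obtain ⟨z, hz, rfl⟩ := Ideal.mem_span_singleton_mul.mp hw
      exact ⟨⟨z, hz⟩, rfl⟩

lemma ProjDimDetectedBy.spanSingleton_mul {c : R} (hc : ∀ z, c * z = 0 → z = 0) {J : Ideal R}
    {d : ℕ} (h : ProjDimDetectedBy Y (ModuleCat.of R J) d) :
    ProjDimDetectedBy Y (ModuleCat.of R (Ideal.span {c} * J : Ideal R)) d :=
  h.of_iso (spanSingletonMulEquiv hc J).toModuleIso

lemma mk₀_inclusion_comp_eq_zero {c : R} (hc : ∀ z, c * z = 0 → z = 0)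
    (hcY : ∀ y : Y, c • y = 0) {A J : Ideal R} (hA : A = Ideal.span {c} * J) (hAJ : A ≤ J) {n : ℕ}
    (ξ : Ext (ModuleCat.of R J) Y n) :
    (Ext.mk₀ (ModuleCat.ofHom (Submodule.inclusion hAJ))).comp ξ (zero_add n) = 0 := by
  subst hA
  have hfac : Submodule.inclusion hAJ = c • (spanSingletonMulEquiv hc J).symm.toLinearMap := by
    ext w
    have hw : c * ((spanSingletonMulEquiv hc J).symm w : R) = w :=
      congrArg Subtype.val ((spanSingletonMulEquiv hc J).apply_symm_apply w)
    exact hw.symm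
  rw [hfac]
  exact mk₀_ofHom_smul_comp hcY _ ξ

lemma ProjDimDetectedBy.span_singleton_mul_sup {A B J : Ideal R} {a b j : ℕ} {x : R}
    (hAB : A ≤ B) (hAJ : A ≤ J) (hcolon : ∀ z ∈ J, x * z ∈ B → z ∈ A)
    (hx : ∀ y : Y, x • y = 0)
    (hA : ProjDimDetectedBy Y (ModuleCat.of R A) a)
    (hB : ProjDimDetectedBy Y (ModuleCat.of R B) b)
    (hJ : ProjDimDetectedBy Y (ModuleCat.of R J) j) (hja : j ≤ a + 1)
    (hincl : ∀ ξ : Ext (ModuleCat.of R J) Y a,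
      (Ext.mk₀ (ModuleCat.ofHom (Submodule.inclusion hAJ))).comp ξ (zero_add a) = 0) :
    ProjDimDetectedBy Y (ModuleCat.of R (Ideal.span {x} * J ⊔ B : Ideal R))
      (max b (a + 1)) := by
  let f : A →ₗ[R] B × J := (x • Submodule.inclusion hAB).prod (Submodule.inclusion hAJ)
  let g : B × J →ₗ[R] (Ideal.span {x} * J ⊔ B : Ideal R) :=
    (B.subtype.coprod (-x • J.subtype)).codRestrict _ fun p ↦ by
      refine add_mem (Ideal.mem_sup_right p.1.2) (Ideal.mem_sup_left ?_)
      simpa using Ideal.mul_mem_mul (Ideal.mem_span_singleton_self x) p.2.2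
  have hg (b : B) (z : J) : (g (b, z) : R) = b - x * z := by
    change (b : R) + -x * z = b - x * z
    ring
  have hinj : Function.Injective f := fun z w hzw ↦
    Submodule.inclusion_injective hAJ (congrArg Prod.snd hzw)
  have hsurj : Function.Surjective g := by
    rintro ⟨_, hw⟩
    obtain ⟨_, hxz, b, hb, rfl⟩ := Submodule.mem_sup.mp hw
    obtain ⟨z, hz, rfl⟩ := Ideal.mem_span_singleton_mul.mp hxz
    exact ⟨(⟨b, hb⟩, -⟨z, hz⟩), Subtype.ext (by simp [hg, add_comm])⟩
  have hexact : Function.Exact f g := by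
    rintro ⟨⟨b, hb⟩, z, hz⟩
    rw [Subtype.ext_iff, hg, ZeroMemClass.coe_zero, sub_eq_zero]
    constructor
    · rintro rfl
      exact ⟨⟨z, hcolon z hz hb⟩, rfl⟩
    · rintro ⟨w, hw⟩
      cases hw
      rfl
  have hS := ModuleCat.shortComplex_shortExact (.mk (ModuleCat.ofHom f) (ModuleCat.ofHom g)
    (ModuleCat.hom_ext hexact.linearMap_comp_eq_zero)) hexact hinj hsurj
  rw [← max_eq_right hja, ← max_assoc]
  exact .of_shortExact hS hA (hB.prod hJ) (mk₀_ofHom_prod_comp (mk₀_ofHom_smul_comp hx _) hincl)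

variable {α : Type*}

lemma sup_span_singleton_mul (y : α → R) (E : Finset α) (J : Ideal R) :
    E.sup (fun b ↦ Ideal.span {y b} * J) = Ideal.span (y '' E) * J := by
  classical
  induction E using Finset.induction_on with
  | empty => simp
  | insert c E _ ih =>
    rw [Finset.sup_insert, ih, ← Ideal.sup_mul, ← Ideal.span_union, ← Set.insert_eq,
      Finset.coe_insert, Set.image_insert_eq]

lemma span_mul_le_sup {y : α → R} {E : Finset α} {I : Ideal R} {J : α → Ideal R}
    (hI : ∀ b ∈ E, I ≤ J b) :
    Ideal.span (y '' E) * I ≤ E.sup fun b ↦ Ideal.span {y b} * J b := by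
  rw [← sup_span_singleton_mul]
  exact Finset.sup_mono_fun fun b hb ↦ Ideal.mul_mono_right (hI b hb)

lemma sup_span_singleton_mul_le (y : α → R) (E : Finset α) (J : α → Ideal R) :
    (E.sup fun b ↦ Ideal.span {y b} * J b) ≤ Ideal.span (y '' E) :=
  Finset.sup_le fun _ hb ↦ Ideal.mul_le_left.trans
    (Ideal.span_mono (Set.singleton_subset_iff.mpr (Set.mem_image_of_mem y hb)))

variable [LinearOrder α]

lemma sup_add_card_filter_lt_add_one {E : Finset α} (hE : E.Nonempty) (d : ℕ) :
    (E.sup fun b ↦ d + #{c ∈ E | c < b}) + 1 = d + #E := by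
  have hpos := hE.card_pos
  suffices h : (E.sup fun b ↦ d + #{c ∈ E | c < b}) = d + (#E - 1) by lia
  refine le_antisymm (Finset.sup_le fun b hb ↦ ?_) ?_
  · have hlt : #{c ∈ E | c < b} < #E :=
      Finset.card_lt_card (Finset.filter_ssubset.mpr ⟨b, hb, lt_irrefl b⟩)
    lia
  · have hmax : {c ∈ E | c < E.max' hE} = E.erase (E.max' hE) := by
      ext c
      simp only [Finset.mem_filter, Finset.mem_erase, and_comm (a := c ∈ E), and_congr_left_iff]
      exact fun hc ↦ ⟨ne_of_lt, (E.le_max' c hc).lt_of_ne⟩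
    rw [← Finset.card_erase_of_mem (E.max'_mem hE), ← hmax]
    exact Finset.le_sup (f := fun b ↦ d + #{c ∈ E | c < b}) (E.max'_mem hE)

lemma sup_insert_add_card_filter_lt {a : α} {E : Finset α} (ha : ∀ b ∈ E, b < a) (d : α → ℕ) :
    ((insert a E).sup fun b ↦ d b + #{c ∈ insert a E | c < b}) =
      max (E.sup fun b ↦ d b + #{c ∈ E | c < b}) (d a + #E) := by
  have hfilter {b : α} (hb : b ≤ a) : {c ∈ insert a E | c < b} = {c ∈ E | c < b} := by
    rw [Finset.filter_insert, if_neg hb.not_gt]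
  rw [Finset.sup_insert, max_comm, hfilter le_rfl, Finset.filter_true_of_mem ha]
  congr 1
  exact Finset.sup_congr rfl fun b hb ↦ by rw [hfilter (ha b hb).le]

theorem ProjDimDetectedBy.finset_sup {y : α → R}
    (hY : ∀ a, ∀ m : Y, y a • m = 0)
    (hreg : ∀ (E : Finset α), ∀ a ∉ E, ∀ z,
      y a * z ∈ Ideal.span (y '' E) → z ∈ Ideal.span (y '' E))
    {D : Finset α} (hD : D.Nonempty) {J : α → Ideal R} {d : α → ℕ} (hanti : AntitoneOn J D)
    (hind : ∀ a ∈ D, ∀ E : Finset α,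
      J a ⊓ Ideal.span (y '' E) ≤ Ideal.span (y '' E) * J a)
    (hd : ∀ a ∈ D, ProjDimDetectedBy Y (ModuleCat.of R (J a)) (d a)) :
    ProjDimDetectedBy Y (ModuleCat.of R (D.sup fun a ↦ Ideal.span {y a} * J a : Ideal R))
      (D.sup fun a ↦ d a + #{b ∈ D | b < a}) := by
  have hy (a : α) (z : R) (hz : y a * z = 0) : z = 0 := by
    simpa using hreg ∅ a (Finset.notMem_empty a) z (by simp [hz])
  induction D using Finset.induction_on_max generalizing J d with
  | empty => exact absurd hD Finset.not_nonempty_empty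
  | insert a E haE ih =>
    have haE' : a ∉ E := fun h ↦ lt_irrefl a (haE a h)
    have hda := hd a (Finset.mem_insert_self a E)
    have hind_a := hind a (Finset.mem_insert_self a E)
    obtain rfl | hE := E.eq_empty_or_nonempty
    · rw [insert_empty_eq, Finset.sup_singleton, Finset.sup_singleton, Finset.filter_singleton,
        if_neg (lt_irrefl a), Finset.card_empty, add_zero]
      exact hda.spanSingleton_mul (hy a)
    have hA : ProjDimDetectedBy Y (ModuleCat.of R (Ideal.span (y '' E) * J a : Ideal R))
        (E.sup fun b ↦ d a + #{c ∈ E | c < b}) := by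
      rw [← sup_span_singleton_mul]
      exact ih hE antitoneOn_const (fun _ _ ↦ hind_a) fun _ _ ↦ hda
    have hB := ih hE (hanti.mono (by simp)) (fun b hb ↦ hind b (Finset.mem_insert_of_mem hb))
      fun b hb ↦ hd b (Finset.mem_insert_of_mem hb)
    have hAB := span_mul_le_sup (y := y) (E := E) fun b hb ↦
      hanti (by simp [hb]) (by simp) (haE b hb).le
    have hcolon (z : R) (hz : z ∈ J a) (hyz : y a * z ∈ E.sup fun b ↦ Ideal.span {y b} * J b) :
        z ∈ Ideal.span (y '' E) * J a :=
      hind_a E ⟨hz, hreg E a haE' z (sup_span_singleton_mul_le y E J hyz)⟩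
    have hdeg := sup_add_card_filter_lt_add_one hE (d a)
    rw [sup_insert_add_card_filter_lt haE, ← hdeg, Finset.sup_insert]
    refine hA.span_singleton_mul_sup hAB Ideal.mul_le_right hcolon (hY a) hB hda (by lia)
      fun ξ ↦ ?_
    obtain hE1 | hE1 := (Finset.one_le_card.mpr hE).eq_or_lt
    · obtain ⟨c, rfl⟩ := Finset.card_eq_one.mp hE1.symm
      exact mk₀_inclusion_comp_eq_zero (hy c) (hY c) (by simp) _ ξ
    · have := hda.subsingleton_ext (n := E.sup fun b ↦ d a + #{c ∈ E | c < b}) (by lia)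
      rw [Subsingleton.elim ξ 0, Ext.comp_zero]

end Ideals

section Monomial

variable {K : Type*} [CommSemiring K] {σ : Type*}

lemma mem_span_X_image_of_X_mul_mem {V : Set σ} {v : σ} (hv : v ∉ V) {p : MvPolynomial σ K}
    (hp : X v * p ∈ Ideal.span (X '' V)) : p ∈ Ideal.span (X '' V) := by
  rw [mem_ideal_span_X_image] at hp ⊢
  intro s hs
  obtain ⟨w, hw, hsw⟩ := hp (Finsupp.single v 1 + s) (by simpa [support_X_mul] using hs)
  have hvw : v ≠ w := fun h ↦ hv (h ▸ hw)
  exact ⟨w, hw, by simpa [Finsupp.single_eq_of_ne hvw.symm] using hsw⟩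

lemma span_monomial_inf_span_X_le {G : Set (σ →₀ ℕ)} {V : Set σ}
    (hGV : ∀ s ∈ G, ∀ v ∈ V, s v = 0) :
    Ideal.span ((fun s ↦ monomial s (1 : K)) '' G) ⊓ Ideal.span (X '' V) ≤
      Ideal.span (X '' V) * Ideal.span ((fun s ↦ monomial s 1) '' G) := by
  rintro p ⟨hpG, hpV⟩
  rw [p.as_sum]
  refine Ideal.sum_mem _ fun s hs ↦ ?_
  obtain ⟨g, hg, hgs⟩ := mem_ideal_span_monomial_image.mp hpG s hs
  obtain ⟨v, hv, hsv⟩ := mem_ideal_span_X_image.mp hpV s hs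
  have hle : Finsupp.single v 1 + g ≤ s := by
    intro w
    by_cases hvw : w = v
    · subst hvw
      simpa [hGV g hg w hv, Nat.one_le_iff_ne_zero] using hsv
    · simpa [Finsupp.single_eq_of_ne hvw] using hgs w
  have hmul : monomial (Finsupp.single v 1 + g) (1 : K) = X v * monomial g 1 := by
    rw [X, monomial_mul, one_mul]
  rw [← tsub_add_cancel_of_le hle, ← mul_one (coeff _ p), ← monomial_mul, hmul]
  exact Ideal.mul_mem_left _ _
    (Ideal.mul_mem_mul (Ideal.subset_span ⟨v, hv, rfl⟩) (Ideal.subset_span ⟨g, hg, rfl⟩))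

end Monomial

section ResidueModule

variable {K : Type u} [CommRing K] {σ : Type v}

lemma idealOfVars_ne_top [Nontrivial K] : idealOfVars σ K ≠ ⊤ := by
  rw [Ideal.ne_top_iff_one]
  simpa using C_mem_pow_idealOfVars_iff (σ := σ) 1 (1 : K)

variable (K σ) in
/-- The residue module `S / (X v : v ∈ σ)` of the polynomial ring `S = K[X v : v ∈ σ]`. It serves as
the test object for projective dimension. -/
noncomputable abbrev residueModule : ModuleCat.{max u v} (MvPolynomial σ K) :=
  .of _ (MvPolynomial σ K ⧸ idealOfVars σ K)

instance [Nontrivial K] : Nontrivial (residueModule K σ) :=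
  Ideal.Quotient.nontrivial_iff.mpr idealOfVars_ne_top

lemma X_smul_residueModule (v : σ) (p : residueModule K σ) :
    (X v : MvPolynomial σ K) • p = 0 := by
  obtain ⟨p, rfl⟩ := Ideal.Quotient.mk_surjective p
  exact Ideal.Quotient.eq_zero_iff_mem.mpr
    (Ideal.mul_mem_right _ _ (Ideal.subset_span (Set.mem_range_self v)))

end ResidueModule

section Letterplace

variable {K : Type u} [CommRing K] {σ : Type u} {α : Type*} {m : ℕ}

/-- The exchange property of a set `F` of words: at the first place where two members of `F` differ,
the larger letter may be replaced by the smaller one. This is what poset ideals of isotone maps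
retain when a letter is fixed. -/
def HasExchange [LT α] (F : Set (Fin m → α)) : Prop :=
  ∀ f ∈ F, ∀ g ∈ F, ∀ i, (∀ j < i, f j = g j) → g i < f i → Function.update f i (g i) ∈ F

/-- The words `f` such that `a` followed by `f` belongs to `F`. -/
def slice (F : Set (Fin (m + 1) → α)) (a : α) : Set (Fin m → α) :=
  {f | Fin.cons a f ∈ F}

/-- The numbers `|B₁| + ⋯ + |Bₘ| - m` for the boxes `B₁ × ⋯ × Bₘ` of nonempty finite sets that are
contained in `F`. -/
def boxExcess (F : Set (Fin m → α)) : Set ℕ :=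
  {t | ∃ B : Fin m → Finset α, (∀ i, (B i).Nonempty) ∧ (∀ f, (∀ i, f i ∈ B i) → f ∈ F) ∧
    ∑ i, #(B i) = m + t}

lemma isGreatest_boxExcess_zero {F : Set (Fin 0 → α)} (hF : F.Nonempty) :
    IsGreatest (boxExcess F) 0 := by
  obtain ⟨f, hf⟩ := hF
  refine ⟨⟨Fin.elim0, fun i ↦ i.elim0, fun g _ ↦ Subsingleton.elim f g ▸ hf, rfl⟩, ?_⟩
  rintro t ⟨_, _, _, ht⟩
  exact (by simpa using ht : 0 = t).ge

section Slice

variable {F : Set (Fin (m + 1) → α)} {a b : α}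

lemma mem_slice {f : Fin m → α} : f ∈ slice F a ↔ Fin.cons a f ∈ F := Iff.rfl

lemma HasExchange.slice [LT α] (h : HasExchange F) (a : α) : HasExchange (slice F a) := by
  intro f hf g hg i hfg hlt
  have hpre (j : Fin (m + 1)) (hj : j < i.succ) :
      (Fin.cons a f : Fin (m + 1) → α) j = (Fin.cons a g : Fin (m + 1) → α) j := by
    induction j using Fin.cases with
    | zero => rfl
    | succ j => exact hfg j (Fin.succ_lt_succ_iff.mp hj)
  have := h _ hf _ hg i.succ hpre hlt
  rwa [Fin.cons_succ, ← Fin.cons_update] at this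

lemma HasExchange.slice_subset [Preorder α] (h : HasExchange F) (hab : a < b)
    (ha : (CoLetterplace.slice F a).Nonempty) :
    CoLetterplace.slice F b ⊆ CoLetterplace.slice F a := by
  obtain ⟨g, hg⟩ := ha
  intro f hf
  have := h _ hf _ hg 0 (fun j hj ↦ absurd hj (Fin.not_lt_zero j)) hab
  rwa [Fin.cons_zero, Fin.update_cons_zero] at this

end Slice

section Heads

variable [Fintype α] {F : Set (Fin (m + 1) → α)} {a b : α}

open Classical in
/-- The first letters of the members of `F`. -/
noncomputable def heads (F : Set (Fin (m + 1) → α)) : Finset α :=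
  {a | (slice F a).Nonempty}

lemma mem_heads : a ∈ heads F ↔ (slice F a).Nonempty := by
  simp [heads]

lemma heads_nonempty (hF : F.Nonempty) : (heads F).Nonempty := by
  obtain ⟨f, hf⟩ := hF
  refine ⟨f 0, mem_heads.mpr ⟨Fin.tail f, ?_⟩⟩
  rwa [mem_slice, Fin.cons_self_tail]

variable [LinearOrder α]

lemma HasExchange.antitoneOn_slice (h : HasExchange F) :
    AntitoneOn (CoLetterplace.slice F) (heads F) := by
  intro a ha b _ hab
  obtain rfl | hab := hab.eq_or_lt
  · rfl
  · exact h.slice_subset hab (mem_heads.mp ha)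

lemma HasExchange.add_card_filter_mem_boxExcess (h : HasExchange F) (ha : a ∈ heads F) {t : ℕ}
    (ht : t ∈ boxExcess (CoLetterplace.slice F a)) :
    t + #{b ∈ heads F | b < a} ∈ boxExcess F := by
  obtain ⟨B, hne, hB, hcard⟩ := ht
  refine ⟨Fin.cons {b ∈ heads F | b ≤ a} B, ?_, fun f hf ↦ ?_, ?_⟩
  · exact Fin.forall_fin_succ.mpr ⟨⟨a, by simpa⟩, hne⟩
  · obtain ⟨hf0, hfs⟩ := Fin.forall_fin_succ.mp hf
    obtain ⟨hf0, hf0a⟩ := Finset.mem_filter.mp hf0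
    rw [← Fin.cons_self_tail f]
    exact h.antitoneOn_slice hf0 ha hf0a (hB _ hfs)
  · have hle : {b ∈ heads F | b ≤ a} = insert a {b ∈ heads F | b < a} := by
      ext b
      simp only [Finset.mem_filter, Finset.mem_insert, le_iff_eq_or_lt, and_or_left]
      refine or_congr_left ⟨fun h ↦ h.2, fun h ↦ ⟨h ▸ ha, h⟩⟩
    rw [Fin.sum_univ_succ]
    simp only [Fin.cons_zero, Fin.cons_succ, hcard, hle]
    rw [Finset.card_insert_of_notMem (by simp)]
    lia

lemma exists_mem_boxExcess_slice {t : ℕ} (ht : t ∈ boxExcess F) :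
    ∃ a ∈ heads F, ∃ s ∈ boxExcess (slice F a), t ≤ s + #{b ∈ heads F | b < a} := by
  obtain ⟨B, hne, hB, hcard⟩ := ht
  choose c hc using hne
  have hslice (b : α) (hb : b ∈ B 0) (f : Fin m → α) (hf : ∀ i, f i ∈ B i.succ) : f ∈ slice F b :=
    hB _ (Fin.forall_fin_succ.mpr ⟨hb, hf⟩)
  have hheads : B 0 ⊆ heads F := fun b hb ↦ mem_heads.mpr ⟨_, hslice b hb _ fun i ↦ hc i.succ⟩
  set a := (B 0).max' ⟨c 0, hc 0⟩
  have ha : a ∈ B 0 := Finset.max'_mem _ _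
  have hpos : m ≤ ∑ i : Fin m, #(B i.succ) := by
    simpa using Finset.card_nsmul_le_sum Finset.univ (fun i : Fin m ↦ #(B i.succ)) 1
      fun i _ ↦ Finset.card_pos.mpr ⟨_, hc i.succ⟩
  have hB0 : #(B 0) ≤ #{b ∈ heads F | b < a} + 1 := by
    rw [← Finset.card_erase_add_one ha]
    gcongr
    intro b hb
    obtain ⟨hba, hb⟩ := Finset.mem_erase.mp hb
    exact Finset.mem_filter.mpr ⟨hheads hb, ((B 0).le_max' b hb).lt_of_ne hba⟩
  refine ⟨a, hheads ha, ∑ i : Fin m, #(B i.succ) - m, ?_, ?_⟩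
  · exact ⟨fun i ↦ B i.succ, fun i ↦ ⟨_, hc i.succ⟩, hslice a ha, by lia⟩
  · rw [Fin.sum_univ_succ] at hcard
    lia

lemma HasExchange.isGreatest_boxExcess (h : HasExchange F) (hF : F.Nonempty) {d : α → ℕ}
    (hd : ∀ a ∈ heads F, IsGreatest (boxExcess (CoLetterplace.slice F a)) (d a)) :
    IsGreatest (boxExcess F) ((heads F).sup fun a ↦ d a + #{b ∈ heads F | b < a}) := by
  refine ⟨?_, fun t ht ↦ ?_⟩
  · obtain ⟨a, ha, hsup⟩ := Finset.exists_mem_eq_sup (heads F) (heads_nonempty hF)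
      fun a ↦ d a + #{b ∈ heads F | b < a}
    rw [hsup]
    exact h.add_card_filter_mem_boxExcess ha (hd a ha).1
  · obtain ⟨a, ha, s, hs, hts⟩ := exists_mem_boxExcess_slice ht
    have hsd := (hd a ha).2 hs
    exact (hts.trans (by lia)).trans
      (Finset.le_sup (f := fun a ↦ d a + #{b ∈ heads F | b < a}) ha)

end Heads

section LetterplaceIdeal

variable (K) in
/-- The ideal generated by the monomials `∏ᵢ X (x i (f i))` for `f ∈ F`. The generalized
co-letterplace ideal is the case `x i a = (i, a)`; allowing other labels of the variables makes the
construction stable under passing to slices. -/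
noncomputable def letterplaceIdeal (x : Fin m → α → σ) (F : Set (Fin m → α)) :
    Ideal (MvPolynomial σ K) :=
  Ideal.span ((fun f ↦ ∏ i, X (x i (f i))) '' F)

lemma letterplaceIdeal_eq_span_monomial (x : Fin m → α → σ) (F : Set (Fin m → α)) :
    letterplaceIdeal K x F = Ideal.span ((fun s ↦ monomial s (1 : K)) ''
      ((fun f ↦ ∑ i, Finsupp.single (x i (f i)) 1) '' F)) := by
  simp only [letterplaceIdeal, Set.image_image, monomial_sum_one, X]

lemma letterplaceIdeal_mono (x : Fin m → α → σ) : Monotone (letterplaceIdeal K x) :=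
  fun _ _ h ↦ Ideal.span_mono (Set.image_mono h)

lemma letterplaceIdeal_inf_span_X_le {x : Fin m → α → σ} (F : Set (Fin m → α)) {V : Set σ}
    (hV : ∀ i a, x i a ∉ V) :
    letterplaceIdeal K x F ⊓ Ideal.span (X '' V) ≤
      Ideal.span (X '' V) * letterplaceIdeal K x F := by
  rw [letterplaceIdeal_eq_span_monomial]
  refine span_monomial_inf_span_X_le ?_
  rintro _ ⟨f, _, rfl⟩ v hv
  have hne (i : Fin m) : v ≠ x i (f i) := fun h ↦ hV i (f i) (h ▸ hv)
  simp [Finsupp.single_eq_of_ne (hne _)]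

lemma letterplaceIdeal_zero {x : Fin 0 → α → σ} {F : Set (Fin 0 → α)}
    (hF : F.Nonempty) : letterplaceIdeal K x F = ⊤ := by
  obtain ⟨f, hf⟩ := hF
  exact (Ideal.eq_top_iff_one _).mpr (Ideal.subset_span ⟨f, hf, by simp⟩)

lemma letterplaceIdeal_eq_sup_heads [Fintype α] (x : Fin (m + 1) → α → σ)
    (F : Set (Fin (m + 1) → α)) :
    letterplaceIdeal K x F = (heads F).sup fun a ↦
      Ideal.span {X (x 0 a)} * letterplaceIdeal K (fun i ↦ x i.succ) (slice F a) := by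
  refine le_antisymm (Ideal.span_le.mpr ?_) (Finset.sup_le fun a _ ↦ ?_)
  · rintro _ ⟨f, hf, rfl⟩
    have hf' : Fin.tail f ∈ slice F (f 0) := by rwa [mem_slice, Fin.cons_self_tail]
    refine SetLike.le_def.mp (Finset.le_sup (f := fun a ↦ Ideal.span {X (x 0 a)} *
      letterplaceIdeal K (fun i ↦ x i.succ) (slice F a)) (mem_heads.mpr ⟨_, hf'⟩)) ?_
    simp only [Fin.prod_univ_succ]
    exact Ideal.mul_mem_mul (Ideal.mem_span_singleton_self _) (Ideal.subset_span ⟨_, hf', rfl⟩)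
  · rw [letterplaceIdeal, Ideal.span_mul_span', Ideal.span_le]
    rintro _ ⟨_, rfl, _, ⟨f, hf, rfl⟩, rfl⟩
    exact Ideal.subset_span ⟨Fin.cons a f, hf, by simp [Fin.prod_univ_succ]⟩

theorem exists_projDimDetectedBy_letterplaceIdeal [Nontrivial K] [Finite α] [LinearOrder α]
    {x : Fin m → α → σ} (hx : Function.Injective2 x) {F : Set (Fin m → α)} (hF : F.Nonempty)
    (h : HasExchange F) :
    ∃ N, IsGreatest (boxExcess F) N ∧
      ProjDimDetectedBy (residueModule K σ) (.of _ (letterplaceIdeal K x F)) N := by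
  have := Fintype.ofFinite α
  induction m with
  | zero =>
    refine ⟨0, isGreatest_boxExcess_zero hF, ?_⟩
    rw [letterplaceIdeal_zero hF]
    exact projDimDetectedBy_top
  | succ m ih =>
    have hxsucc : Function.Injective2 fun i : Fin m ↦ x i.succ := fun _ _ _ _ hij ↦ by
      obtain ⟨hij, hab⟩ := hx hij
      exact ⟨Fin.succ_injective _ hij, hab⟩
    have hslice (a : α) (ha : a ∈ heads F) := ih hxsucc (mem_heads.mp ha) (h.slice a)
    choose! d hgreatest hdetected using hslice
    refine ⟨_, h.isGreatest_boxExcess hF hgreatest, ?_⟩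
    rw [letterplaceIdeal_eq_sup_heads]
    refine .finset_sup (y := fun a ↦ X (x 0 a)) (fun a ↦ X_smul_residueModule _) ?_
      (heads_nonempty hF) ((letterplaceIdeal_mono _).comp_antitoneOn h.antitoneOn_slice) ?_
      hdetected
    · intro E a haE p hp
      rw [← Set.image_image X] at hp ⊢
      refine mem_span_X_image_of_X_mul_mem ?_ hp
      rintro ⟨b, hb, hab⟩
      exact haE ((hx hab).2 ▸ hb)
    · intro a _ E
      rw [← Set.image_image X]
      refine letterplaceIdeal_inf_span_X_le _ fun i b hb ↦ ?_
      obtain ⟨c, _, hc⟩ := hb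
      exact Fin.succ_ne_zero i (hx hc).1.symm

end LetterplaceIdeal

end Letterplace

section Minimal

variable {R : Type*} [CommRing R] {𝔪 : Ideal R} {F G M : Type*} [AddCommGroup F] [AddCommGroup G]
  [AddCommGroup M] [Module R F] [Module R G] [Module R M]

lemma ker_le_smul_ker_of_projective [Module.Projective R M] {φ : F →ₗ[R] M}
    (hφ : Function.Surjective φ) (hker : LinearMap.ker φ ≤ 𝔪 • ⊤) :
    LinearMap.ker φ ≤ 𝔪 • LinearMap.ker φ := by
  obtain ⟨s, hs⟩ := Module.projective_lifting_property φ LinearMap.id hφ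
  let ρ : F →ₗ[R] F := LinearMap.id - s ∘ₗ φ
  have hρ : LinearMap.range ρ ≤ LinearMap.ker φ := by
    rintro _ ⟨w, rfl⟩
    simpa [ρ, sub_eq_zero] using (LinearMap.congr_fun hs (φ w)).symm
  intro z hz
  have hρz : ρ z = z := by simp [ρ, LinearMap.mem_ker.mp hz]
  have hmap : ρ z ∈ (𝔪 • ⊤ : Submodule R F).map ρ := Submodule.mem_map_of_mem (hker hz)
  rw [Submodule.map_smul'', Submodule.map_top, hρz] at hmap
  exact Submodule.smul_mono le_rfl hρ hmap

lemma smul_top_eq_top_of_range_le {d : F →ₗ[R] G}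
    (hrange : LinearMap.range d ≤ 𝔪 • LinearMap.range d) (hker : LinearMap.ker d ≤ 𝔪 • ⊤) :
    (𝔪 • ⊤ : Submodule R F) = ⊤ := by
  rw [← Submodule.map_top, ← Submodule.map_smul'', LinearMap.map_le_map_iff,
    sup_eq_left.mpr hker] at hrange
  exact top_le_iff.mp hrange

lemma isEmpty_of_smul_top_eq_top {ι : Type*} (h𝔪 : 𝔪 ≠ ⊤)
    (h : (𝔪 • ⊤ : Submodule R (ι →₀ R)) = ⊤) : IsEmpty ι := by
  refine ⟨fun i ↦ h𝔪 ((Ideal.eq_top_iff_one _).mpr ?_)⟩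
  have hi : Finsupp.single i (1 : R) ∈ (𝔪 • ⊤ : Submodule R (ι →₀ R)) := by
    rw [h]
    exact Submodule.mem_top
  simpa using Submodule.smul_top_le_comap_smul_top 𝔪 (Finsupp.lapply i) hi

lemma range_le_smul_top {ι κ : Type*} {d : (ι →₀ R) →ₗ[R] (κ →₀ R)}
    (hd : ∀ i k, d (Finsupp.single i 1) k ∈ 𝔪) : LinearMap.range d ≤ 𝔪 • ⊤ := by
  rw [← Submodule.map_top, ← Finsupp.basisSingleOne.span_eq, Submodule.map_span, Submodule.span_le]
  rintro _ ⟨_, ⟨i, rfl⟩, rfl⟩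
  rw [Finsupp.coe_basisSingleOne, ← (d (Finsupp.single i 1)).sum_single]
  refine Submodule.sum_mem _ fun k _ ↦ ?_
  rw [← Finsupp.smul_single_one]
  exact Submodule.smul_mem_smul (hd i k) Submodule.mem_top

end Minimal
end CoLetterplace

namespace MinMGFreeRes

open CoLetterplace

variable {K : Type} [Field K] {σ : Type} {I : Ideal (MvPolynomial σ K)} (Res : MinMGFreeRes K σ I)

lemma d_single_mem_idealOfVars (t : ℕ) (b : Res.B (t + 1)) (c : Res.B t) :
    Res.d t (Finsupp.single b 1) c ∈ idealOfVars σ K := by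
  obtain ⟨k, hk, hdeg⟩ := Res.graded_d t b c
  obtain rfl | hk0 := eq_or_ne k 0
  · simp [hk]
  obtain ⟨hle, hne⟩ := hdeg hk0
  have hpos : Res.deg (t + 1) b - Res.deg t c ≠ 0 := fun h ↦
    hne (hle.antisymm (tsub_eq_zero_iff_le.mp h))
  rw [hk, ← pow_one (idealOfVars σ K), monomial_mem_pow_idealOfVars_iff 1 _ hk0]
  exact Nat.one_le_iff_ne_zero.mpr ((Finsupp.degree_eq_zero_iff _).not.mpr hpos)

lemma range_d_le (t : ℕ) : LinearMap.range (Res.d t) ≤ idealOfVars σ K • ⊤ :=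
  range_le_smul_top (Res.d_single_mem_idealOfVars t)

/-- The `t`-th syzygy module: the ideal itself for `t = 0`, and the image of the differential ending
in homological degree `t - 1` otherwise. -/
noncomputable def syzygy : ℕ → ModuleCat (MvPolynomial σ K)
  | 0 => .of _ I
  | t + 1 => .of _ (LinearMap.range (Res.d t))

/-- The map of the free module in homological degree `t` onto the `t`-th syzygy module. -/
noncomputable def cover : (t : ℕ) → (Res.B t →₀ MvPolynomial σ K) →ₗ[MvPolynomial σ K] Res.syzygy t
  | 0 => Res.ε.codRestrict I fun w ↦ Res.epi.le (LinearMap.mem_range_self _ w)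
  | t + 1 => (Res.d t).rangeRestrict

lemma cover_surjective : ∀ t, Function.Surjective (Res.cover t)
  | 0 => fun ⟨p, hp⟩ ↦ by
    obtain ⟨w, hw⟩ := Res.epi.ge hp
    exact ⟨w, Subtype.ext hw⟩
  | t + 1 => (Res.d t).surjective_rangeRestrict

lemma ker_cover : ∀ t, LinearMap.ker (Res.cover t) = LinearMap.range (Res.d t)
  | 0 => (LinearMap.ker_codRestrict _ _ _).trans Res.exact0
  | t + 1 => (LinearMap.ker_rangeRestrict _).trans (Res.exact t)

lemma hasProjectiveDimensionLT_syzygy_iff (t n : ℕ) :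
    HasProjectiveDimensionLT (Res.syzygy t) (n + 2) ↔
      HasProjectiveDimensionLT (Res.syzygy (t + 1)) (n + 1) := by
  have h := (LinearMap.shortExact_shortComplexKer
    (Res.cover_surjective t)).hasProjectiveDimensionLT_X₃_iff n
      ((IsProjective.iff_projective _).mp inferInstance)
  dsimp only [LinearMap.shortComplexKer] at h
  rwa [ker_cover] at h

lemma hasProjectiveDimensionLT_iff_syzygy (t n : ℕ) :
    HasProjectiveDimensionLT (ModuleCat.of (MvPolynomial σ K) I) (n + t + 1) ↔
      HasProjectiveDimensionLT (Res.syzygy t) (n + 1) := by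
  induction t generalizing n with
  | zero => rfl
  | succ t ih => rw [← hasProjectiveDimensionLT_syzygy_iff, ← ih, ← add_assoc, add_right_comm n 1 t]

lemma projective_syzygy_iff (t : ℕ) :
    Module.Projective (MvPolynomial σ K) (Res.syzygy t) ↔ IsEmpty (Res.B (t + 1)) := by
  refine ⟨fun _ ↦ ?_, fun _ ↦ ?_⟩
  · have hrange := ker_le_smul_ker_of_projective (Res.cover_surjective t)
      ((Res.ker_cover t).trans_le (Res.range_d_le t))
    rw [ker_cover] at hrange
    exact isEmpty_of_smul_top_eq_top idealOfVars_ne_top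
      (smul_top_eq_top_of_range_le hrange ((Res.exact t).trans_le (Res.range_d_le (t + 1))))
  · have hker : LinearMap.ker (Res.cover t) = ⊥ := by
      rw [ker_cover, LinearMap.range_eq_bot]
      exact Subsingleton.elim _ _
    let e : (Res.B t →₀ MvPolynomial σ K) ≃ₗ[MvPolynomial σ K] Res.syzygy t :=
      .ofBijective (Res.cover t) ⟨LinearMap.ker_eq_bot.mp hker, Res.cover_surjective t⟩
    exact .of_equiv e

lemma hasProjectiveDimensionLT_succ_iff (t : ℕ) :
    HasProjectiveDimensionLT (ModuleCat.of (MvPolynomial σ K) I) (t + 1) ↔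
      IsEmpty (Res.B (t + 1)) := by
  rw [← Res.projective_syzygy_iff, IsProjective.iff_projective,
    projective_iff_hasProjectiveDimensionLT_one]
  simpa only [zero_add] using Res.hasProjectiveDimensionLT_iff_syzygy t 0

lemma hasProjectiveDimensionLT_of_isEmpty {t : ℕ} (ht : IsEmpty (Res.B t)) :
    HasProjectiveDimensionLT (ModuleCat.of (MvPolynomial σ K) I) t := by
  cases t with
  | zero =>
    have : Subsingleton I := (Res.cover_surjective 0).subsingleton
    exact (ModuleCat.isZero_of_subsingleton _).hasProjectiveDimensionLT_zero
  | succ t => exact (Res.hasProjectiveDimensionLT_succ_iff t).mpr ht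

theorem isGreatest_of_projDimDetectedBy {Y : ModuleCat (MvPolynomial σ K)} {N : ℕ}
    (h : ProjDimDetectedBy Y (.of _ I) N) : IsGreatest {t | Nonempty (Res.B t)} N := by
  refine ⟨?_, fun t ht ↦ ?_⟩
  · by_contra hN
    exact h.not_hasProjectiveDimensionLT
      (Res.hasProjectiveDimensionLT_of_isEmpty (not_nonempty_iff.mp hN))
  · by_contra! hlt
    obtain ⟨t, rfl⟩ := Nat.exists_eq_add_one.mpr (hlt.pos)
    exact not_isEmpty_iff.mpr ht
      ((Res.hasProjectiveDimensionLT_succ_iff t).mp (h.hasProjectiveDimensionLT hlt))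

end MinMGFreeRes

namespace CoLetterplace

section PosetIdeal

variable {m : ℕ} {α : Type*} [LinearOrder α] {r : Fin m → Fin m → Prop} {A : Fin m → Finset α}
  {F : Set (Fin m → α)}

/-- The set `F` is a poset ideal of `Hom(P, A)`, where `P` is `Fin m` with the order `r` and `A` is
the family of admissible value sets. -/
structure IsPosetIdeal (r : Fin m → Fin m → Prop) (A : Fin m → Finset α)
    (F : Set (Fin m → α)) : Prop where
  mem : ∀ f ∈ F, ∀ i, f i ∈ A i
  monotone : ∀ f ∈ F, ∀ i j, r i j → f i ≤ f j
  down : ∀ f ∈ F, ∀ g : Fin m → α, (∀ i, g i ∈ A i) → (∀ i j, r i j → g i ≤ g j) →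
    (∀ i, g i ≤ f i) → g ∈ F

lemma IsPosetIdeal.hasExchange (h : IsPosetIdeal r A F) (hr : ∀ i j, r i j → i ≤ j) :
    HasExchange F := by
  intro f hf g hg i hfg hlt
  refine h.down f hf _ (fun j ↦ ?_) (fun p q hpq ↦ ?_) (update_le_self_iff.mpr hlt.le)
  · obtain rfl | hj := eq_or_ne j i
    · simpa using h.mem g hg j
    · simpa [hj] using h.mem f hf j
  · obtain rfl | hq := eq_or_ne q i
    · obtain rfl | hp := eq_or_ne p q
      · rfl
      · have hpq' := hfg p ((hr p q hpq).lt_of_ne hp)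
        simpa [hp, hpq'] using h.monotone g hg p q hpq
    · obtain rfl | hp := eq_or_ne p i
      · simpa [hq] using hlt.le.trans (h.monotone f hf p q hpq)
      · simpa [hp, hq] using h.monotone f hf p q hpq

lemma IsPosetIdeal.box_subset_iff (h : IsPosetIdeal r A F) {B : Fin m → Finset α}
    (hne : ∀ i, (B i).Nonempty) :
    (∀ f, (∀ i, f i ∈ B i) → f ∈ F) ↔
      (∀ i, B i ⊆ A i) ∧ (∀ i j, r i j → i ≠ j → ∀ a ∈ B i, ∀ b ∈ B j, a ≤ b) ∧
        ∃ g ∈ F, ∀ i, g i ∈ B i ∧ ∀ a ∈ B i, a ≤ g i := by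
  constructor
  · intro hB
    choose c hc using hne
    have hupdate {f : Fin m → α} (hf : ∀ k, f k ∈ B k) {i : Fin m} {a : α} (ha : a ∈ B i) (k) :
        Function.update f i a k ∈ B k := by
      obtain rfl | hk := eq_or_ne k i
      · simpa
      · simpa [hk] using hf k
    refine ⟨fun i a ha ↦ ?_, fun i j hij hne a ha b hb ↦ ?_, fun i ↦ (B i).max' ⟨c i, hc i⟩,
      hB _ fun i ↦ (B i).max'_mem _, fun i ↦ ⟨(B i).max'_mem _, (B i).le_max'⟩⟩
    · simpa using h.mem _ (hB _ (hupdate hc ha)) i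
    · simpa [hne] using h.monotone _ (hB _ (hupdate (hupdate hc ha) hb)) i j hij
  · rintro ⟨hA, hle, g, hg, hgB⟩ f hf
    refine h.down g hg f (fun i ↦ hA i (hf i)) (fun i j hij ↦ ?_) fun i ↦ (hgB i).2 _ (hf i)
    obtain rfl | hne := eq_or_ne i j
    · rfl
    · exact hle i j hij hne _ (hf i) _ (hf j)

lemma IsPosetIdeal.boxExcess_eq (h : IsPosetIdeal r A F) :
    boxExcess F = {t | ∃ B : Fin m → Finset α, (∀ i, B i ⊆ A i) ∧ (∀ i, (B i).Nonempty) ∧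
      (∀ i j, r i j → i ≠ j → ∀ a ∈ B i, ∀ b ∈ B j, a ≤ b) ∧
      (∃ g ∈ F, ∀ i, g i ∈ B i ∧ ∀ a ∈ B i, a ≤ g i) ∧ ∑ i, #(B i) = m + t} := by
  ext t
  refine exists_congr fun B ↦ ⟨fun ⟨hne, hB, ht⟩ ↦ ?_, fun ⟨hA, hne, hle, hmax, ht⟩ ↦ ?_⟩
  · obtain ⟨hA, hle, hmax⟩ := (h.box_subset_iff hne).mp hB
    exact ⟨hA, hne, hle, hmax, ht⟩
  · exact ⟨hne, (h.box_subset_iff hne).mpr ⟨hA, hle, hmax⟩, ht⟩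

end PosetIdeal

end CoLetterplace

theorem stmt8_general {K : Type} [Field K] {σ α : Type} [Finite α] [LinearOrder α] {m : ℕ}
    {x : Fin m → α → σ} (hx : Function.Injective2 x) {F : Set (Fin m → α)} (hF : F.Nonempty)
    (hexch : CoLetterplace.HasExchange F)
    (Res : MinMGFreeRes K σ (CoLetterplace.letterplaceIdeal K x F)) :
    ∃ N, IsGreatest {t | Nonempty (Res.B t)} N ∧ IsGreatest (CoLetterplace.boxExcess F) N := by
  obtain ⟨N, hgreatest, hdetected⟩ :=
    CoLetterplace.exists_projDimDetectedBy_letterplaceIdeal (K := K) hx hF hexch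
  exact ⟨N, Res.isGreatest_of_projDimDetectedBy hdetected, hgreatest⟩

/-- the projective dimension of `L(𝔄)` — the largest homological
degree with a nonzero free module in a minimal multigraded free resolution —
equals the maximum of `|K₁| + ⋯ + |Kₘ| − m` over the admissible tuples
`(K₁,…,Kₘ)` (conditions (1),(3),(4) of the construction). -/
theorem stmt8 (K : Type) [Field K] (m n : ℕ) (r : Fin m → Fin m → Prop)
    (hrefl : ∀ i, r i i) (htrans : ∀ i j k, r i j → r j k → r i k)
    (hcompat : ∀ i j, r i j → i ≤ j)
    (A : Fin m → Finset (Fin n)) (hA : ∀ i, (A i).Nonempty)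
    (𝔄 : Set (Fin m → Fin n)) (h𝔄ne : 𝔄.Nonempty)
    (hsub : ∀ f ∈ 𝔄, (∀ i, f i ∈ A i) ∧ (∀ i j, r i j → f i ≤ f j))
    (hdown : ∀ f ∈ 𝔄, ∀ g : Fin m → Fin n, (∀ i, g i ∈ A i) →
      (∀ i j, r i j → g i ≤ g j) → (∀ i, g i ≤ f i) → g ∈ 𝔄)
    (Res : MinMGFreeRes K (Fin m × Fin n)
      (Ideal.span ((fun f : Fin m → Fin n =>
        ∏ i : Fin m, (X (i, f i) : MvPolynomial (Fin m × Fin n) K)) '' 𝔄))) :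
    sSup {t : ℕ | Nonempty (Res.B t)} =
      sSup {t : ℕ | ∃ Kf : Fin m → Finset (Fin n),
        (∀ i, Kf i ⊆ A i) ∧ (∀ i, (Kf i).Nonempty) ∧
        (∀ i j, r i j → i ≠ j → ∀ a ∈ Kf i, ∀ b ∈ Kf j, a ≤ b) ∧
        (∃ g ∈ 𝔄, ∀ i, g i ∈ Kf i ∧ ∀ a ∈ Kf i, a ≤ g i) ∧
        (∑ i, (Kf i).card) = m + t} := by
  have h : CoLetterplace.IsPosetIdeal r A 𝔄 :=
    ⟨fun f hf ↦ (hsub f hf).1, fun f hf ↦ (hsub f hf).2, hdown⟩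
  obtain ⟨N, hB, hF⟩ := stmt8_general (fun _ _ _ _ ↦ Prod.mk.inj) h𝔄ne (h.hasExchange hcompat) Res
  rw [hB.csSup_eq, ← h.boxExcess_eq, hF.csSup_eq]
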